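/- Let A be a commutative group and let a, b, c, d, e, f ∈ A satisfy a·b·c = 1 and d·e·f = 1. If the multisets {a, b, c, a⁻¹, b⁻¹, c⁻¹} and {d, e, f, d⁻¹, e⁻¹, f⁻¹} are equal, then the multisets {a, b, c} and {d, e, f} are equal, or the multisets {a, b, c} and {d⁻¹, e⁻¹, f⁻¹} are equal. -/

import Mathlib

/-!
Write `s⁻¹` for `s` inverted elementwise. If `s + s⁻¹ = t + t⁻¹`, then `s` and `t` differ only by
inverting some elements: `s = u + v` and `t = u + v⁻¹`. If `s` has at most three elements, then `u`
or `v` has at most one. When `s`, `t` and `t⁻¹` have the same product, cancellation shows that `v`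
and `v⁻¹` have the same product, and so do `u` and `u⁻¹`; whichever of `u`, `v` has at most one
element is therefore stable under inversion. If it is `v` then `s = t`, and if it is `u` then
`s = t⁻¹`.
-/

theorem count_map_of_involutive {α : Type*} [DecidableEq α] {f : α → α}
    (hf : Function.Involutive f) (s : Multiset α) (x : α) :
    (s.map f).count x = s.count (f x) := by
  simpa only [hf x] using Multiset.count_map_eq_count' f s hf.injective (f x)

theorem sub_eq_map_sub_of_add_map_eq {α : Type*} [DecidableEq α] {f : α → α}
    (hf : Function.Involutive f) {s t : Multiset α} (h : s + s.map f = t + t.map f) :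
    t - s = (s - t).map f := by
  ext x
  have hcount : s.count x + s.count (f x) = t.count x + t.count (f x) := by
    simpa only [Multiset.count_add, count_map_of_involutive hf] using congrArg (Multiset.count x) h
  rw [count_map_of_involutive hf, Multiset.count_sub, Multiset.count_sub]
  omega

theorem exists_eq_add_and_eq_add_map {α : Type*} {f : α → α}
    (hf : Function.Involutive f) {s t : Multiset α} (h : s + s.map f = t + t.map f) :
    ∃ u v, s = u + v ∧ t = u + v.map f := by
  classical
  refine ⟨s ∩ t, s - t, ?_, ?_⟩
  · rw [add_comm, Multiset.sub_add_inter]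
  · rw [← sub_eq_map_sub_of_add_map_eq hf h, Multiset.inter_comm, add_comm,
      Multiset.sub_add_inter]

theorem eq_of_prod_eq_of_card_le_one {M : Type*} [CommMonoid M] {s t : Multiset M}
    (hs : s.card ≤ 1) (hcard : s.card = t.card) (hprod : s.prod = t.prod) : s = t := by
  rcases Nat.le_one_iff_eq_zero_or_eq_one.mp hs with hs | hs
  · rw [Multiset.card_eq_zero.mp hs, Multiset.card_eq_zero.mp (hcard.symm.trans hs)]
  · obtain ⟨x, rfl⟩ := Multiset.card_eq_one.mp hs
    obtain ⟨y, rfl⟩ := Multiset.card_eq_one.mp (hcard.symm.trans hs)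
    simpa only [Multiset.prod_singleton, Multiset.singleton_inj] using hprod

theorem add_eq_add_map_of_card_le_one {M : Type*} [CancelCommMonoid M] {f : M → M}
    {u v : Multiset M} (hv : v.card ≤ 1) (hprod : (u + v).prod = (u + v.map f).prod) :
    u + v = u + v.map f := by
  rw [Multiset.prod_add, Multiset.prod_add] at hprod
  rw [← eq_of_prod_eq_of_card_le_one hv (v.card_map f).symm (mul_left_cancel hprod)]

theorem multiset_eq_or_eq_inv_of_selfDualUnion_eq_general {A : Type*} [CommGroup A]
    {s t : Multiset A} (hs : s.card ≤ 3) (hprod : s.prod = t.prod) (hprod_inv : s.prod = t.prod⁻¹)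
    (h : s + s.map (·⁻¹) = t + t.map (·⁻¹)) :
    s = t ∨ s = t.map (·⁻¹) := by
  obtain ⟨u, v, rfl, rfl⟩ := exists_eq_add_and_eq_add_map inv_involutive h
  have map_inv_add : (u + v.map (·⁻¹)).map (·⁻¹) = v + u.map (·⁻¹) := by simp [add_comm]
  have card_le_one : v.card ≤ 1 ∨ u.card ≤ 1 := by
    rw [Multiset.card_add] at hs
    omega
  rcases card_le_one with hv | hu
  · exact .inl (add_eq_add_map_of_card_le_one hv hprod)
  · right
    rw [← Multiset.prod_map_inv', map_inv_add, add_comm u v] at hprod_inv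
    rw [map_inv_add, add_comm u v]
    exact add_eq_add_map_of_card_le_one hu hprod_inv

/-- **Three one-dimensional summands case of Lemma 2.2(i).**
Let `A` be a commutative group and `a b c d e f : A` with `a*b*c = 1` and `d*e*f = 1`.
If the multisets `{a, b, c, a⁻¹, b⁻¹, c⁻¹}` and `{d, e, f, d⁻¹, e⁻¹, f⁻¹}` coincide, then
`{a, b, c} = {d, e, f}` or `{a, b, c} = {d⁻¹, e⁻¹, f⁻¹}` as multisets. -/
theorem multiset_eq_or_eq_inv_of_selfDualUnion_eq {A : Type*} [CommGroup A]
    (a b c d e f : A) (habc : a * b * c = 1) (hdef : d * e * f = 1)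
    (h : ({a, b, c, a⁻¹, b⁻¹, c⁻¹} : Multiset A) = ({d, e, f, d⁻¹, e⁻¹, f⁻¹} : Multiset A)) :
    ({a, b, c} : Multiset A) = ({d, e, f} : Multiset A) ∨
      ({a, b, c} : Multiset A) = ({d⁻¹, e⁻¹, f⁻¹} : Multiset A) := by
  simpa using multiset_eq_or_eq_inv_of_selfDualUnion_eq_general (s := {a, b, c}) (t := {d, e, f})
    (by simp) (by simp [← mul_assoc, habc, hdef]) (by simp [← mul_assoc, habc, hdef]) h
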